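/- arXiv:2507.06324 — 2 statements merged into one kernel-verified Lean document; each statement's English description precedes it below -/
import Mathlib

section
/- Let D, p, q ∈ ℕ with D = p + q. For all j, k : Fin q → Fin D, contracting two Levi-Civita symbols over their first p indices gives ∑_{i : Fin p → Fin D} ε(i ⊕ j) · ε(i ⊕ k) = p! · δ(j, k), as an identity in ℤ (or any commutative ring). (In unit-weight conventions this is ε_{i₁⋯i_p j₁⋯j_q} ε^{i₁⋯i_p k₁⋯k_q} = p! q! δ^{k₁⋯k_q}_{j₁⋯j_q}.) -/
/-- Levi-Civita symbol: the determinant of the `D × D` matrix whose `(a,b)` entry is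
`1` if `i a = b` and `0` otherwise; it equals the sign of `i` when `i` is a
permutation of `Fin D` and `0` otherwise. -/
def eps (R : Type*) [CommRing R] {D : ℕ} (i : Fin D → Fin D) : R :=
  Matrix.det (Matrix.of fun a b => if i a = b then (1 : R) else 0)

/-- Generalized Kronecker delta: the determinant of the `p × p` matrix whose
`(a,b)` entry is `1` if `j a = i b` and `0` otherwise. -/
def gdelta (R : Type*) [CommRing R] {p D : ℕ} (j i : Fin p → Fin D) : R :=
  Matrix.det (Matrix.of fun a b => if j a = i b then (1 : R) else 0)

open Matrix in
/-- The determinant of a bordered matrix, in terms of the adjugate of the inner block. -/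
theorem det_fin_succ_eq_sub_sum_adjugate {R : Type*} [CommRing R] {n : ℕ}
    (M : Matrix (Fin (n + 1)) (Fin (n + 1)) R) :
    M.det = M 0 0 * (M.submatrix Fin.succ Fin.succ).det
      - ∑ b, ∑ a, M 0 b.succ * M a.succ 0 * (M.submatrix Fin.succ Fin.succ).adjugate b a := by
  cases n with
  | zero => simp
  | succ n =>
    rw [det_succ_row_zero, Fin.sum_univ_succ, sub_eq_add_neg, ← Finset.sum_neg_distrib]
    congr 1
    · simp
    · refine Finset.sum_congr rfl fun b _ => ?_
      rw [det_succ_column_zero, Finset.mul_sum, ← Finset.sum_neg_distrib]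
      refine Finset.sum_congr rfl fun a _ => ?_
      rw [adjugate_fin_succ_eq_det_submatrix]
      have hsub : (M.submatrix Fin.succ b.succ.succAbove).submatrix a.succAbove Fin.succ =
          (M.submatrix Fin.succ Fin.succ).submatrix a.succAbove b.succAbove := by
        ext; simp
      rw [hsub]
      simp only [submatrix_apply, Fin.succ_succAbove_zero, Fin.val_succ]
      ring

theorem eps_mul_eps (R : Type*) [CommRing R] {D : ℕ} (i j : Fin D → Fin D) :
    eps R i * eps R j = gdelta R i j := by
  unfold eps gdelta
  rw [← Matrix.det_transpose (Matrix.of fun a b => if j a = b then (1 : R) else 0),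
    ← Matrix.det_mul]
  congr 1
  ext a b
  simp [Matrix.mul_apply, eq_comm]

/-- Precomposing both index tuples with the same bijection preserves the generalized delta. -/
theorem gdelta_comp_equiv (R : Type*) [CommRing R] {m n D : ℕ} (e : Fin m ≃ Fin n)
    (j k : Fin n → Fin D) : gdelta R (j ∘ e) (k ∘ e) = gdelta R j k :=
  Matrix.det_submatrix_equiv_self e (Matrix.of fun a b => if j a = k b then (1 : R) else 0)

/-- Contraction of a generalized delta over a single index. -/
theorem sum_gdelta_cons (R : Type*) [CommRing R] {n D : ℕ} (j k : Fin n → Fin D) :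
    ∑ x, gdelta R (Fin.cons x j : Fin (n + 1) → Fin D) (Fin.cons x k)
      = ((D : R) - n) * gdelta R j k := by
  set A : Matrix (Fin n) (Fin n) R := Matrix.of fun a b => if j a = k b then 1 else 0 with hA
  have hexpand (x : Fin D) : gdelta R (Fin.cons x j : Fin (n + 1) → Fin D) (Fin.cons x k) =
      A.det - ∑ b, ∑ a, (if x = k b then 1 else 0) * (if j a = x then 1 else 0)
        * A.adjugate b a := by
    rw [gdelta, det_fin_succ_eq_sub_sum_adjugate]
    have hsub : (Matrix.of fun a b : Fin (n + 1) =>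
        if (Fin.cons x j : Fin (n + 1) → Fin D) a = (Fin.cons x k : Fin (n + 1) → Fin D) b
          then (1 : R) else 0).submatrix Fin.succ Fin.succ = A := by
      ext; simp [hA]
    rw [hsub]
    simp
  have htrace : ∑ b, ∑ a, A a b * A.adjugate b a = n * A.det := by
    simp_rw [← Matrix.det_eq_sum_mul_adjugate_col A]
    simp
  have hcontract (a b : Fin n) :
      ∑ x, (if x = k b then (1 : R) else 0) * (if j a = x then 1 else 0) = A a b := by
    simp [hA]
  simp_rw [hexpand]
  rw [Finset.sum_sub_distrib, Finset.sum_comm]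
  simp_rw [Finset.sum_comm (s := (Finset.univ : Finset (Fin D))), ← Finset.sum_mul, hcontract]
  rw [htrace]
  simp [gdelta, ← hA, sub_mul]

/-- Contraction of a generalized delta over its first `p` indices. -/
theorem sum_gdelta_append (R : Type*) [CommRing R] {p q D : ℕ} (j k : Fin q → Fin D) :
    ∑ i : Fin p → Fin D, gdelta R (Fin.append i j) (Fin.append i k)
      = (∏ r ∈ Finset.range p, ((D : R) - (r + q : ℕ))) * gdelta R j k := by
  induction p with
  | zero =>
    simp only [Finset.univ_unique, Finset.sum_singleton, Finset.range_zero, Finset.prod_empty,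
      one_mul, Fin.append_left_nil _ _ rfl]
    exact gdelta_comp_equiv R (finCongr (Nat.zero_add q)) j k
  | succ p ih =>
    have hcons (x : Fin D) (i : Fin p → Fin D) :
        gdelta R (Fin.append (Fin.cons x i : Fin (p + 1) → Fin D) j)
            (Fin.append (Fin.cons x i : Fin (p + 1) → Fin D) k)
          = gdelta R (Fin.cons x (Fin.append i j) : Fin (p + q + 1) → Fin D)
            (Fin.cons x (Fin.append i k)) := by
      rw [Fin.append_cons, Fin.append_cons]
      exact gdelta_comp_equiv R (finCongr (Nat.add_right_comm p 1 q)) _ _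
    rw [← (Fin.consEquiv fun _ => Fin D).sum_comp, Fintype.sum_prod_type_right]
    simp only [Fin.consEquiv, Equiv.coe_fn_mk, hcons, sum_gdelta_cons]
    rw [← Finset.mul_sum, ih, Finset.prod_range_succ]
    ring

/-- Contraction of two Levi-Civita symbols over their first `p` indices in
dimension `D = p + q`: `∑ i, ε(i ⊕ j) · ε(i ⊕ k) = p! · δ(j, k)`. -/
theorem eps_contract_eps (p q : ℕ) (j k : Fin q → Fin (p + q)) :
    ∑ i : Fin p → Fin (p + q), eps ℤ (Fin.append i j) * eps ℤ (Fin.append i k)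
      = (p.factorial : ℤ) * gdelta ℤ j k := by
  simp_rw [eps_mul_eps, sum_gdelta_append]
  rw [← Nat.descFactorial_self, Nat.descFactorial_eq_prod_range, Nat.cast_prod]
  congr 1
  refine Finset.prod_congr rfl fun r hr => ?_
  rw [Nat.cast_sub (Finset.mem_range.mp hr).le]
  push_cast
  ring
end

section
/- (Double Hodge dual identity, coefficient form.) Let D, p, q ∈ ℕ with D = p + q, and let g : Matrix (Fin D) (Fin D) ℝ be symmetric and invertible, with inverse g⁻¹. Then for all i, r : Fin p → Fin D: det g · ∑_{k : Fin p → Fin D} ∑_{j : Fin q → Fin D} ∑_{s : Fin q → Fin D} (∏_{a : Fin p} g⁻¹ (i a) (k a)) · (∏_{b : Fin q} g⁻¹ (j b) (s b)) · ε(j ⊕ k) · ε(r ⊕ s) = (−1)^{pq} · q! · δ(i, r). This expresses that applying the Hodge dual twice to the coordinate p-form dx^{i₁} ∧ ⋯ ∧ dx^{i_p} returns (−1)^{pq+t} times the same form. -/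
open Matrix Equiv

section LeviCivita

variable {R : Type*} [CommRing R]

theorem eps_eq_det_submatrix {D : ℕ} (c : Fin D → Fin D) :
    eps R c = ((1 : Matrix (Fin D) (Fin D) R).submatrix c id).det :=
  rfl

theorem gdelta_eq_det_submatrix {p D : ℕ} (j i : Fin p → Fin D) :
    gdelta R j i = ((1 : Matrix (Fin D) (Fin D) R).submatrix j i).det :=
  rfl

theorem eps_eq_zero_of_not_injective {D : ℕ} {c : Fin D → Fin D}
    (hc : ¬ Function.Injective c) : eps R c = 0 := by
  obtain ⟨a, b, hab, hne⟩ := Function.not_injective_iff.mp hc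
  exact det_zero_of_row_eq hne (by ext x; simp [hab])

theorem gdelta_eq_zero_of_not_injective {p D : ℕ} {j : Fin p → Fin D}
    (hj : ¬ Function.Injective j) (i : Fin p → Fin D) : gdelta R j i = 0 := by
  obtain ⟨a, b, hab, hne⟩ := Function.not_injective_iff.mp hj
  exact det_zero_of_row_eq hne (by ext x; simp [hab])

theorem eps_comp_perm {D : ℕ} (c : Fin D → Fin D) (σ : Perm (Fin D)) :
    eps R (c ∘ σ) = Perm.sign σ * eps R c :=
  det_permute σ ((1 : Matrix (Fin D) (Fin D) R).submatrix c id)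

/-- The rows of `h` selected by `c` have determinant `ε(c) det h`. -/
theorem det_submatrix_eq_eps_mul {D : ℕ} (h : Matrix (Fin D) (Fin D) R) (c : Fin D → Fin D) :
    (h.submatrix c id).det = eps R c * h.det := by
  rw [eps_eq_det_submatrix, ← det_mul]
  congr 1
  ext a b
  simp [mul_apply, one_apply]

theorem eps_perm_comp {D : ℕ} (σ : Perm (Fin D)) (c : Fin D → Fin D) :
    eps R (σ ∘ c) = eps R c * Perm.sign σ := by
  have hσ : eps R (σ : Fin D → Fin D) = Perm.sign σ := by
    simpa [eps_eq_det_submatrix] using det_permute σ (1 : Matrix (Fin D) (Fin D) R)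
  rw [← hσ]
  exact det_submatrix_eq_eps_mul ((1 : Matrix (Fin D) (Fin D) R).submatrix σ id) c

/-- Contracting every index of `ε` against rows of `h`. -/
theorem sum_prod_mul_eps {D : ℕ} (h : Matrix (Fin D) (Fin D) R) (c : Fin D → Fin D) :
    ∑ f : Fin D → Fin D, (∏ a, h (c a) (f a)) * eps R f = eps R c * h.det := by
  rw [← det_submatrix_eq_eps_mul]
  have hrow : h.submatrix c id
      = fun a => ∑ b, h (c a) b • (1 : Matrix (Fin D) (Fin D) R) b := by
    ext a b
    simp [one_apply]
  rw [hrow]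
  refine Eq.symm (((detRowAlternating (n := Fin D) (R := R)).toMultilinearMap.map_sum
    (fun a b => h (c a) b • (1 : Matrix (Fin D) (Fin D) R) b)).trans ?_)
  refine Finset.sum_congr rfl fun f _ => ?_
  rw [MultilinearMap.map_smul_univ _ (fun a => h (c a) (f a))
    (fun a => (1 : Matrix (Fin D) (Fin D) R) (f a))]
  rfl

theorem val_finRotate_pow (n m : ℕ) (x : Fin n) :
    ((finRotate n ^ m) x : ℕ) = (x + m) % n := by
  induction m with
  | zero => simp [Nat.mod_eq_of_lt x.isLt]
  | succ m ih =>
    have := x.neZero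
    rw [pow_succ', Perm.mul_apply, finRotate_apply, Fin.val_add, ih]
    simp [Nat.add_assoc]

theorem sign_finRotate_add_pow (p q : ℕ) :
    Perm.sign (finRotate (p + q) ^ p) = (-1) ^ (p * q) := by
  rw [map_pow, sign_finRotate, ← pow_mul]
  cases p with
  | zero => simp
  | succ n =>
    have hexp : (n + 1 + q - 1) * (n + 1) = n * (n + 1) + (n + 1) * q := by
      rw [show n + 1 + q - 1 = n + q by omega]; ring
    rw [hexp, pow_add, (Nat.even_mul_succ_self n).neg_one_pow, one_mul]

theorem eps_append_swap {p q : ℕ} (k : Fin p → Fin (p + q)) (j : Fin q → Fin (p + q)) :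
    eps R (Fin.append j k ∘ Fin.cast (Nat.add_comm p q))
      = (-1) ^ (p * q) * eps R (Fin.append k j) := by
  have hrot : Fin.append j k ∘ Fin.cast (Nat.add_comm p q)
      = Fin.append k j ∘ (finRotate (p + q) ^ p) := by
    funext x
    obtain ⟨y, rfl⟩ := (finCongr (Nat.add_comm q p)).surjective x
    induction y using Fin.addCases with
    | left b =>
      have hb : (finRotate (p + q) ^ p) (finCongr (Nat.add_comm q p) (Fin.castAdd p b))
          = Fin.natAdd p b := by
        ext
        rw [val_finRotate_pow]
        simp [Nat.add_comm, Nat.mod_eq_of_lt]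
      rw [Function.comp_apply, Function.comp_apply, hb, Fin.append_right]
      exact Fin.append_left j k b
    | right a =>
      have ha : (finRotate (p + q) ^ p) (finCongr (Nat.add_comm q p) (Fin.natAdd q a))
          = Fin.castAdd q a := by
        ext
        rw [val_finRotate_pow]
        simp only [finCongr_apply, Fin.val_cast, Fin.val_natAdd, Fin.val_castAdd]
        rw [show q + (a : ℕ) + p = a + (p + q) by ring, Nat.add_mod_right,
          Nat.mod_eq_of_lt (by omega)]
      rw [Function.comp_apply, Function.comp_apply, ha, Fin.append_left]
      exact Fin.append_right j k a
  rw [hrot, eps_comp_perm, sign_finRotate_add_pow]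
  simp

theorem eps_append_eq_det_fromBlocks {p q : ℕ} (r : Fin p → Fin (p + q))
    (s : Fin q → Fin (p + q)) :
    eps R (Fin.append r s) = (fromBlocks
      ((1 : Matrix (Fin (p + q)) (Fin (p + q)) R).submatrix r (Fin.castAdd q))
      ((1 : Matrix (Fin (p + q)) (Fin (p + q)) R).submatrix r (Fin.natAdd p))
      ((1 : Matrix (Fin (p + q)) (Fin (p + q)) R).submatrix s (Fin.castAdd q))
      ((1 : Matrix (Fin (p + q)) (Fin (p + q)) R).submatrix s (Fin.natAdd p))).det := by
  rw [eps_eq_det_submatrix, ← det_submatrix_equiv_self finSumFinEquiv]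
  congr 1
  ext (a | a) (b | b) <;> simp [one_apply]

theorem eps_append_castAdd {p q : ℕ} (s : Fin q → Fin (p + q)) :
    eps R (Fin.append (Fin.castAdd q) s) = gdelta R s (Fin.natAdd p) := by
  have h₁₁ : (1 : Matrix (Fin (p + q)) (Fin (p + q)) R).submatrix
      (Fin.castAdd q) (Fin.castAdd q) = 1 :=
    submatrix_one _ (Fin.castAdd_injective p q)
  have h₁₂ : (1 : Matrix (Fin (p + q)) (Fin (p + q)) R).submatrix
      (Fin.castAdd q) (Fin.natAdd p) = 0 := by
    ext a b
    exact one_apply_ne (Fin.ne_of_lt (by simp [Fin.lt_def]; omega))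
  rw [eps_append_eq_det_fromBlocks, h₁₁, h₁₂, det_fromBlocks_zero₁₂, det_one, one_mul,
    gdelta_eq_det_submatrix]

theorem eps_append_natAdd_perm {p q : ℕ} (r : Fin p → Fin (p + q)) (τ : Perm (Fin q)) :
    eps R (Fin.append r (Fin.natAdd p ∘ τ))
      = gdelta R r (Fin.castAdd q) * Perm.sign τ := by
  have h₂₁ : (1 : Matrix (Fin (p + q)) (Fin (p + q)) R).submatrix
      (Fin.natAdd p ∘ τ) (Fin.castAdd q) = 0 := by
    ext a b
    exact one_apply_ne (Fin.ne_of_gt (by simp [Fin.lt_def]; omega))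
  have h₂₂ : (1 : Matrix (Fin (p + q)) (Fin (p + q)) R).submatrix
      (Fin.natAdd p ∘ τ) (Fin.natAdd p) = (1 : Matrix (Fin q) (Fin q) R).submatrix τ id := by
    ext a b
    simp [one_apply]
  rw [eps_append_eq_det_fromBlocks, h₂₁, h₂₂, det_fromBlocks_zero₂₁, det_permute, det_one,
    mul_one, gdelta_eq_det_submatrix]

theorem gdelta_comm {p D : ℕ} (j i : Fin p → Fin D) : gdelta R j i = gdelta R i j := by
  rw [gdelta_eq_det_submatrix, gdelta_eq_det_submatrix, ← det_transpose, transpose_submatrix,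
    transpose_one]

theorem gdelta_comp_injective {p D : ℕ} {f : Fin D → Fin D} (hf : Function.Injective f)
    (j i : Fin p → Fin D) : gdelta R (f ∘ j) (f ∘ i) = gdelta R j i := by
  simp [gdelta, hf.eq_iff]

/-- A generalized delta acts on functions of index tuples as an antisymmetrizer. -/
theorem sum_gdelta_mul {q D : ℕ} (t : Fin q → Fin D) (F : (Fin q → Fin D) → R) :
    ∑ s : Fin q → Fin D, gdelta R s t * F s
      = ∑ τ : Perm (Fin q), (Perm.sign τ : R) * F (t ∘ τ) := by
  have hprod (s : Fin q → Fin D) (τ : Perm (Fin q)) :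
      ∏ a, (1 : Matrix (Fin D) (Fin D) R).submatrix t s (τ a) a
        = if s = t ∘ τ then 1 else 0 := by
    simp only [submatrix_apply, one_apply, Finset.prod_ite_zero, Finset.prod_const_one,
      Finset.mem_univ, true_implies]
    exact if_congr (by rw [funext_iff]; exact forall_congr' fun a => eq_comm) rfl rfl
  simp_rw [gdelta_comm _ t, gdelta_eq_det_submatrix, det_apply', hprod, Finset.sum_mul]
  rw [Finset.sum_comm]
  simp

theorem sum_eps_append_castAdd_mul {p q : ℕ} (r : Fin p → Fin (p + q)) :
    ∑ s : Fin q → Fin (p + q),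
        eps R (Fin.append (Fin.castAdd q) s) * eps R (Fin.append r s)
      = (q.factorial : R) * gdelta R (Fin.castAdd q) r := by
  have hsign (τ : Perm (Fin q)) : ((Perm.sign τ : ℤ) : R) * (Perm.sign τ : ℤ) = 1 := by
    rw [← Int.cast_mul, ← Units.val_mul, Int.units_mul_self]; simp
  simp_rw [eps_append_castAdd]
  rw [sum_gdelta_mul]
  simp_rw [eps_append_natAdd_perm, mul_left_comm _ (gdelta R r _), hsign]
  simp [gdelta_comm r, Fintype.card_perm]

/-- Contracting two Levi-Civita symbols over their last `q` indices. -/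
theorem sum_eps_append_mul_eps_append {p q : ℕ} (i r : Fin p → Fin (p + q)) :
    ∑ s : Fin q → Fin (p + q), eps R (Fin.append i s) * eps R (Fin.append r s)
      = (q.factorial : R) * gdelta R i r := by
  by_cases hi : Function.Injective i
  · obtain ⟨σ, rfl⟩ : ∃ σ : Perm (Fin (p + q)), σ ∘ Fin.castAdd q = i := by
      obtain ⟨σ, hσ⟩ := Perm.exists_extending_pair _ _ (Fin.castAdd_injective p q) hi
      exact ⟨σ, funext hσ⟩
    obtain ⟨r, rfl⟩ : ∃ r' : Fin p → Fin (p + q), σ ∘ r' = r :=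
      ⟨σ.symm ∘ r, by ext; simp⟩
    have hsign : ((Perm.sign σ : ℤ) : R) * (Perm.sign σ : ℤ) = 1 := by
      rw [← Int.cast_mul, ← Units.val_mul, Int.units_mul_self]; simp
    have happ (u : Fin p → Fin (p + q)) (s : Fin q → Fin (p + q)) :
        Fin.append (σ ∘ u) (σ ∘ s) = σ ∘ Fin.append u s := by
      funext x
      induction x using Fin.addCases <;> simp
    rw [gdelta_comp_injective σ.injective, ← sum_eps_append_castAdd_mul,
      ← (Equiv.arrowCongr (Equiv.refl (Fin q)) σ).sum_comp]
    refine Finset.sum_congr rfl fun s _ => ?_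
    change eps R (Fin.append _ (σ ∘ s)) * eps R (Fin.append _ (σ ∘ s)) = _
    rw [happ, happ, eps_perm_comp, eps_perm_comp, mul_mul_mul_comm, hsign, mul_one]
  · rw [gdelta_eq_zero_of_not_injective hi, mul_zero]
    refine Finset.sum_eq_zero fun s _ => ?_
    rw [eps_eq_zero_of_not_injective fun h => hi (Fin.append_injective_iff.mp h).1, zero_mul]

end LeviCivita

/-- Double Hodge dual identity in coefficient form, for a symmetric invertible
metric `g` in dimension `D = p + q`: applying the Hodge dual twice to a coordinate
`p`-form returns `(-1)^{pq}` times the same form. -/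
theorem double_hodge_dual_coeff (p q : ℕ)
    (g : Matrix (Fin (p + q)) (Fin (p + q)) ℝ)
    (hsymm : g.IsSymm) (hg : IsUnit g.det)
    (i r : Fin p → Fin (p + q)) :
    g.det * ∑ k : Fin p → Fin (p + q), ∑ j : Fin q → Fin (p + q),
        ∑ s : Fin q → Fin (p + q),
          (∏ a : Fin p, g⁻¹ (i a) (k a)) * (∏ b : Fin q, g⁻¹ (j b) (s b))
            * eps ℝ (Fin.append j k ∘ Fin.cast (Nat.add_comm p q))
            * eps ℝ (Fin.append r s)
      = (-1) ^ (p * q) * (q.factorial : ℝ) * gdelta ℝ i r := by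
  have hinv : (g⁻¹).IsSymm := hsymm.inv
  have hdet : g.det * (g⁻¹).det = 1 := by rw [← det_mul, mul_nonsing_inv g hg, det_one]
  have hcontract (s : Fin q → Fin (p + q)) :
      ∑ k : Fin p → Fin (p + q), ∑ j : Fin q → Fin (p + q),
        (∏ a, g⁻¹ (i a) (k a)) * (∏ b, g⁻¹ (j b) (s b)) * eps ℝ (Fin.append k j)
      = eps ℝ (Fin.append i s) * (g⁻¹).det := by
    rw [← sum_prod_mul_eps, ← (Fin.appendEquiv p q).sum_comp, Fintype.sum_prod_type]
    simp [Fin.appendEquiv, Fin.prod_univ_add, fun b (j : Fin q → _) => hinv.apply (j b) (s b)]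
  calc
    _ = g.det * ∑ s : Fin q → Fin (p + q), (-1) ^ (p * q) *
          (∑ k : Fin p → Fin (p + q), ∑ j : Fin q → Fin (p + q),
            (∏ a, g⁻¹ (i a) (k a)) * (∏ b, g⁻¹ (j b) (s b)) * eps ℝ (Fin.append k j))
          * eps ℝ (Fin.append r s) := by
      simp_rw [Finset.mul_sum, Finset.sum_mul, Finset.mul_sum]
      refine Eq.trans (Finset.sum_congr rfl fun k _ => Finset.sum_comm) (Finset.sum_comm.trans ?_)
      refine Finset.sum_congr rfl fun s _ => Finset.sum_congr rfl fun k _ =>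
        Finset.sum_congr rfl fun j _ => ?_
      rw [eps_append_swap]
      ring
    _ = (g.det * (g⁻¹).det) * ((-1) ^ (p * q) *
          ∑ s : Fin q → Fin (p + q), eps ℝ (Fin.append i s) * eps ℝ (Fin.append r s)) := by
      simp_rw [hcontract, Finset.mul_sum]
      exact Finset.sum_congr rfl fun s _ => by ring
    _ = _ := by rw [hdet, sum_eps_append_mul_eps_append, one_mul, mul_assoc]
end
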